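/- Let T : H → H be nonexpansive with Fix T ≠ ∅, λ : [0,∞) → [0,1] measurable with either ∫₀^∞ λ(t)(1−λ(t)) dt = +∞ or inf_{t≥0} λ(t) > 0, and let x be the unique strong global solution of ẋ(t) = λ(t)(T(x(t)) − x(t)), x(0) = x₀. Then the trajectory x is bounded, ∫₀^∞ ‖ẋ(t)‖² dt < ∞, T(x(t)) − x(t) → 0 and ẋ(t) → 0 as t → ∞, and x(t) converges weakly to a fixed point of T. -/

import Mathlib

open Filter MeasureTheory Set Topology
open scoped RealInnerProductSpace

/-!
For every fixed point `y` the squared distance `‖x t - y‖ ^ 2` decreases at rate at least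
`λ ‖T x - x‖ ^ 2`, so that this product is integrable. The residual `‖T x - x‖` is itself
nonincreasing: to first order `x` moves along the segment from `x t` to `T (x t)`, and along a
segment from `a` to `T a` the residual of a nonexpansive map never exceeds `‖T a - a‖`. Both
alternatives of the hypothesis force `∫ λ = ∞`, hence the residual tends to zero. By
demiclosedness every weak cluster point of the trajectory is then a fixed point, and Opial's lemma
gives weak convergence.
-/

theorem exists_tendsto_atTop_of_antitoneOn_Ici {f : ℝ → ℝ} {a : ℝ} (hf : AntitoneOn f (Ici a))
    (hbdd : BddBelow (f '' Ici a)) : ∃ l, Tendsto f atTop (𝓝 l) := by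
  have hanti : Antitone fun t => f (max a t) := fun s t hst =>
    hf (le_max_left a s) (le_max_left a t) (max_le_max_left a hst)
  have hrange : BddBelow (range fun t => f (max a t)) :=
    hbdd.mono (range_subset_iff.2 fun t => mem_image_of_mem f (le_max_left a t))
  refine ⟨_, (tendsto_atTop_ciInf hanti hrange).congr' ?_⟩
  filter_upwards [eventually_ge_atTop a] with t ht
  rw [max_eq_right ht]

theorem tendsto_zero_of_antitoneOn_of_lintegral_mul_ne_top {w : ℝ → ENNReal} {f : ℝ → ℝ} {a : ℝ}
    (hf : AntitoneOn f (Ici a)) (hf_nonneg : ∀ t ∈ Ici a, 0 ≤ f t)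
    (hw : ∫⁻ t in Ici a, w t = ⊤) (hwf : ∫⁻ t in Ici a, w t * ENNReal.ofReal (f t) ≠ ⊤) :
    Tendsto f atTop (𝓝 0) := by
  have exists_lt : ∀ ε > 0, ∃ s ∈ Ici a, f s < ε := by
    intro ε hε
    by_contra! hle
    refine hwf (top_le_iff.1 ?_)
    calc (⊤ : ENNReal) = (∫⁻ t in Ici a, w t) * ENNReal.ofReal ε := by
          rw [hw, ENNReal.top_mul (ENNReal.ofReal_pos.2 hε).ne']
      _ ≤ ∫⁻ t in Ici a, w t * ENNReal.ofReal ε := lintegral_mul_const_le _ _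
      _ ≤ ∫⁻ t in Ici a, w t * ENNReal.ofReal (f t) :=
          setLIntegral_mono' measurableSet_Ici fun t ht => by gcongr; exact hle t ht
  refine Metric.tendsto_atTop.2 fun ε hε => ?_
  obtain ⟨s, hs, hfs⟩ := exists_lt ε hε
  refine ⟨s, fun t hst => ?_⟩
  have ht : t ∈ Ici a := le_trans hs hst
  rw [Real.dist_eq, sub_zero, abs_of_nonneg (hf_nonneg t ht)]
  exact (hf hs ht hst).trans_lt hfs

theorem lintegral_ofReal_eq_top_of_mul_one_sub_or_le {w : ℝ → ℝ} {a : ℝ}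
    (hw : (∫⁻ t in Ici a, ENNReal.ofReal (w t * (1 - w t))) = ⊤ ∨
      ∃ ε > (0 : ℝ), ∀ t ≥ a, ε ≤ w t) :
    ∫⁻ t in Ici a, ENNReal.ofReal (w t) = ⊤ := by
  rw [← top_le_iff]
  rcases hw with htop | ⟨ε, hε, hle⟩
  · rw [← htop]
    refine lintegral_mono fun t => ENNReal.ofReal_le_ofReal ?_
    linarith [mul_self_nonneg (w t)]
  · calc (⊤ : ENNReal) = ∫⁻ _ in Ici a, ENNReal.ofReal ε := by
          simp [ENNReal.mul_top, hε]
      _ ≤ ∫⁻ t in Ici a, ENNReal.ofReal (w t) :=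
          setLIntegral_mono' measurableSet_Ici fun t ht => ENNReal.ofReal_le_ofReal (hle t ht)

theorem antitoneOn_Ici_of_eventually_slope_lt {f : ℝ → ℝ} {a : ℝ} (hf : ContinuousOn f (Ici a))
    (hslope : ∀ t ∈ Ici a, ∀ r > 0, ∀ᶠ z in 𝓝[>] t, slope f t z < r) :
    AntitoneOn f (Ici a) := by
  intro s hs t _ hst
  exact image_le_of_liminf_slope_right_le_deriv_boundary (B := fun _ => f s) (B' := fun _ => 0)
    (hf.mono fun u hu => le_trans hs hu.1) le_rfl continuousOn_const
    (fun u _ => hasDerivWithinAt_const u (Ici u) (f s))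
    (fun u hu r hr => (hslope u (le_trans hs hu.1) r hr).frequently) (right_mem_Icc.2 hst)

section WeakConvergence

variable {H ι : Type*} [NormedAddCommGroup H] [InnerProductSpace ℝ H]

/-- Weak convergence in a real inner product space of a function along a filter, tested against the
vectors of the space; by Riesz representation this is convergence in the weak topology when the
space is complete. -/
def TendstoWeakly (x : ι → H) (F : Filter ι) (p : H) : Prop :=
  ∀ z : H, Tendsto (fun t => ⟪x t - p, z⟫) F (𝓝 0)

theorem TendstoWeakly.tendsto_inner {x : ι → H} {F : Filter ι} {p : H} (h : TendstoWeakly x F p)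
    (z : H) : Tendsto (fun t => ⟪x t, z⟫) F (𝓝 ⟪p, z⟫) := by
  simpa only [inner_sub_left, sub_add_cancel, zero_add] using (h z).add_const ⟪p, z⟫

theorem exists_tendstoWeakly_of_isBoundedUnder [CompleteSpace H] {x : ι → H} (U : Ultrafilter ι)
    (hx : IsBoundedUnder (· ≤ ·) U fun t => ‖x t‖) : ∃ p, TendstoWeakly x U p := by
  obtain ⟨C, hC⟩ := hx.eventually_le
  let φ : ι → WeakDual ℝ H := fun t => StrongDual.toWeakDual (InnerProductSpace.toDual ℝ H (x t))
  obtain ⟨w, -, hw⟩ :=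
    (WeakDual.isCompact_closedBall (0 : StrongDual ℝ H) C).ultrafilter_le_nhds' (U.map φ) <|
      hC.mono fun t ht => by simpa [φ] using ht
  refine ⟨(InnerProductSpace.toDual ℝ H).symm (WeakDual.toStrongDual w), fun z => ?_⟩
  have hφ : Tendsto (fun t => φ t z) U (𝓝 (w z)) :=
    ((WeakDual.eval_continuous z).tendsto w).comp hw
  have hsub : Tendsto (fun t => φ t z - w z) U (𝓝 0) := by
    simpa only [sub_self] using hφ.sub_const (w z)
  refine hsub.congr fun t => ?_
  rw [inner_sub_left, InnerProductSpace.toDual_symm_apply]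
  rfl

theorem exists_tendsto_inner_sub_of_tendsto_norm_sub {x : ι → H} {F : Filter ι} {p q : H} {l m : ℝ}
    (hp : Tendsto (fun t => ‖x t - p‖) F (𝓝 l)) (hq : Tendsto (fun t => ‖x t - q‖) F (𝓝 m)) :
    ∃ k, Tendsto (fun t => ⟪x t, p - q⟫) F (𝓝 k) := by
  refine ⟨_, (((hq.pow 2).sub (hp.pow 2)).add_const (‖p‖ ^ 2 - ‖q‖ ^ 2)).div_const 2 |>.congr
    fun t => ?_⟩
  rw [norm_sub_sq_real, norm_sub_sq_real, inner_sub_right]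
  ring

theorem TendstoWeakly.eq_of_exists_tendsto_norm_sub {x : ι → H} {F G₁ G₂ : Filter ι} [G₁.NeBot]
    [G₂.NeBot] (hG₁ : G₁ ≤ F) (hG₂ : G₂ ≤ F) {p q : H} (hp : TendstoWeakly x G₁ p)
    (hq : TendstoWeakly x G₂ q) (hp_norm : ∃ l, Tendsto (fun t => ‖x t - p‖) F (𝓝 l))
    (hq_norm : ∃ m, Tendsto (fun t => ‖x t - q‖) F (𝓝 m)) : p = q := by
  obtain ⟨l, hl⟩ := hp_norm
  obtain ⟨m, hm⟩ := hq_norm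
  obtain ⟨k, hk⟩ := exists_tendsto_inner_sub_of_tendsto_norm_sub hl hm
  have hpk : ⟪p, p - q⟫ = k :=
    tendsto_nhds_unique (hp.tendsto_inner (p - q)) (hk.mono_left hG₁)
  have hqk : ⟪q, p - q⟫ = k :=
    tendsto_nhds_unique (hq.tendsto_inner (p - q)) (hk.mono_left hG₂)
  rw [← sub_eq_zero, ← inner_self_eq_zero (𝕜 := ℝ), inner_sub_left, hpk, hqk, sub_self]

theorem exists_mem_tendstoWeakly_of_cluster_mem [CompleteSpace H] {x : ι → H} {F : Filter ι}
    [F.NeBot] {S : Set H} (hS : S.Nonempty)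
    (hnorm : ∀ p ∈ S, ∃ l, Tendsto (fun t => ‖x t - p‖) F (𝓝 l))
    (hcluster : ∀ U : Ultrafilter ι, ↑U ≤ F → ∀ p, TendstoWeakly x U p → p ∈ S) :
    ∃ p ∈ S, TendstoWeakly x F p := by
  obtain ⟨y, hy⟩ := hS
  have hbdd : IsBoundedUnder (· ≤ ·) F fun t => ‖x t‖ := by
    obtain ⟨l, hl⟩ := hnorm y hy
    refine (hl.add_const ‖y‖).isBoundedUnder_le.mono_le (Eventually.of_forall fun t => ?_)
    simpa only [sub_add_cancel] using norm_add_le (x t - y) y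
  have hlimit (U : Ultrafilter ι) (hU : ↑U ≤ F) : ∃ p ∈ S, TendstoWeakly x U p := by
    obtain ⟨p, hp⟩ := exists_tendstoWeakly_of_isBoundedUnder U (hbdd.mono hU)
    exact ⟨p, hcluster U hU p hp, hp⟩
  obtain ⟨U, hU⟩ := exists_ultrafilter_le F
  obtain ⟨p, hpS, hp⟩ := hlimit U hU
  refine ⟨p, hpS, fun z => (tendsto_iff_ultrafilter _ _ _).2 fun V hV => ?_⟩
  obtain ⟨q, hqS, hq⟩ := hlimit V hV
  rw [hp.eq_of_exists_tendsto_norm_sub hU hV hq (hnorm p hpS) (hnorm q hqS)]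
  exact hq z

end WeakConvergence

section Nonexpansive

theorem norm_map_sub_le_of_isFixedPt {E : Type*} [SeminormedAddCommGroup E] {T : E → E} {y : E}
    (hT : LipschitzWith 1 T) (hy : Function.IsFixedPt T y) (a : E) : ‖T a - y‖ ≤ ‖a - y‖ := by
  simpa [hy.eq] using hT.norm_sub_le a y

theorem norm_map_sub_self_le_add_two_mul_norm {E : Type*} [NormedAddCommGroup E] [NormedSpace ℝ E]
    {T : E → E} (hT : LipschitzWith 1 T) (a b : E) {s : ℝ} (hs : s ∈ Icc (0 : ℝ) 1) :
    ‖T b - b‖ ≤ ‖T a - a‖ + 2 * ‖b - a - s • (T a - a)‖ := by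
  set u := T a - a with hu
  set e := b - a - s • u with he
  have hba : b - a = s • u + e := by rw [he]; abel
  have hTab : T a - b = (1 - s) • u - e := by rw [he, hu]; module
  calc ‖T b - b‖ ≤ ‖T b - T a‖ + ‖T a - b‖ := norm_sub_le_norm_sub_add_norm_sub _ _ _
    _ ≤ ‖b - a‖ + ‖T a - b‖ := by
        gcongr
        simpa using hT.norm_sub_le b a
    _ = ‖s • u + e‖ + ‖(1 - s) • u - e‖ := by rw [hba, hTab]
    _ ≤ (‖s • u‖ + ‖e‖) + (‖(1 - s) • u‖ + ‖e‖) := add_le_add (norm_add_le _ _) (norm_sub_le _ _)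
    _ = ‖u‖ + 2 * ‖e‖ := by
        rw [norm_smul_of_nonneg hs.1, norm_smul_of_nonneg (sub_nonneg.2 hs.2)]
        ring

variable {H : Type*} [NormedAddCommGroup H] [InnerProductSpace ℝ H]

theorem two_mul_inner_sub_map_sub_self_le {T : H → H} {a y : H} (h : ‖T a - y‖ ≤ ‖a - y‖) :
    2 * ⟪a - y, T a - a⟫ ≤ -‖T a - a‖ ^ 2 := by
  have hsq : ‖(a - y) + (T a - a)‖ ^ 2 ≤ ‖a - y‖ ^ 2 := by
    rw [sub_add_sub_cancel']
    gcongr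
  rw [norm_add_sq_real] at hsq
  linarith

theorem mul_norm_map_sub_self_sq_le {T : H → H} {a y : H} (h : ‖T a - y‖ ≤ ‖a - y‖) {c : ℝ}
    (hc : 0 ≤ c) : c * ‖T a - a‖ ^ 2 ≤ -(2 * ⟪a - y, c • (T a - a)⟫) := by
  have := mul_le_mul_of_nonneg_left (two_mul_inner_sub_map_sub_self_le h) hc
  rw [inner_smul_right]
  linarith

theorem two_mul_inner_smul_map_sub_self_nonpos {T : H → H} {a y : H} (h : ‖T a - y‖ ≤ ‖a - y‖)
    {c : ℝ} (hc : 0 ≤ c) : 2 * ⟪a - y, c • (T a - a)⟫ ≤ 0 := by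
  have hnonneg : 0 ≤ c * ‖T a - a‖ ^ 2 := by positivity
  linarith [mul_norm_map_sub_self_sq_le h hc]

theorem norm_sub_map_sq_le {T : H → H} (hT : LipschitzWith 1 T) (a p : H) :
    ‖p - T p‖ ^ 2 ≤ ‖T a - a‖ ^ 2 + 2 * (‖T a - a‖ * ‖a - p‖) - 2 * ⟪a - p, p - T p⟫ := by
  have htri : ‖(a - p) + (p - T p)‖ ≤ ‖T a - a‖ + ‖a - p‖ := by
    calc ‖(a - p) + (p - T p)‖ = ‖a - T p‖ := by rw [sub_add_sub_cancel]
      _ ≤ ‖a - T a‖ + ‖T a - T p‖ := norm_sub_le_norm_sub_add_norm_sub _ _ _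
      _ ≤ ‖T a - a‖ + ‖a - p‖ := by
          rw [norm_sub_rev a]
          gcongr
          simpa using hT.norm_sub_le a p
  have hsq := pow_le_pow_left₀ (norm_nonneg _) htri 2
  rw [norm_add_sq_real] at hsq
  linarith

theorem TendstoWeakly.isFixedPt {ι : Type*} {F : Filter ι} [F.NeBot] {T : H → H}
    (hT : LipschitzWith 1 T) {x : ι → H} {p : H} (hx : TendstoWeakly x F p)
    (hbdd : IsBoundedUnder (· ≤ ·) F fun t => ‖x t - p‖)
    (hres : Tendsto (fun t => T (x t) - x t) F (𝓝 0)) : Function.IsFixedPt T p := by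
  have hnorm : Tendsto (fun t => ‖T (x t) - x t‖) F (𝓝 0) :=
    tendsto_zero_iff_norm_tendsto_zero.1 hres
  have hmul : Tendsto (fun t => ‖T (x t) - x t‖ * ‖x t - p‖) F (𝓝 0) :=
    hnorm.zero_mul_isBoundedUnder_le (by simpa only [Function.comp_def, norm_norm] using hbdd)
  have hlim := ((hnorm.pow 2).add (hmul.const_mul 2)).sub ((hx (p - T p)).const_mul 2)
  have hsq : ‖p - T p‖ ^ 2 ≤ 0 := by
    simpa using ge_of_tendsto' hlim fun t => norm_sub_map_sq_le hT (x t) p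
  rw [sq_nonpos_iff, norm_eq_zero, sub_eq_zero] at hsq
  exact hsq.symm

end Nonexpansive

/-- `IsKrasnoselskiiMannCurve T lam a x` says that `x` solves the continuous Krasnosel'skiĭ–Mann
dynamics `ẋ(t) = λ(t)(T(x(t)) − x(t))` on `[a, ∞)`, with a one-sided derivative at `a`. -/
def IsKrasnoselskiiMannCurve {E : Type*} [NormedAddCommGroup E] [NormedSpace ℝ E] (T : E → E)
    (lam : ℝ → ℝ) (a : ℝ) (x : ℝ → E) : Prop :=
  IsIntegralCurveOn x (fun t z => lam t • (T z - z)) (Ici a)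

namespace IsKrasnoselskiiMannCurve

section NormedSpace

variable {E : Type*} [NormedAddCommGroup E] [NormedSpace ℝ E] {T : E → E} {lam : ℝ → ℝ} {a : ℝ}
  {x : ℝ → E}

theorem hasDerivAt (hx : IsKrasnoselskiiMannCurve T lam a x) {t : ℝ} (ht : t ∈ Ioi a) :
    HasDerivAt x (lam t • (T (x t) - x t)) t :=
  (hx t (mem_Ici_of_Ioi ht)).hasDerivAt (Ici_mem_nhds ht)

theorem eventually_slope_norm_residual_lt (hT : LipschitzWith 1 T)
    (hx : IsKrasnoselskiiMannCurve T lam a x) {t : ℝ} (ht : t ∈ Ici a) (hlam : 0 ≤ lam t) {r : ℝ}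
    (hr : 0 < r) : ∀ᶠ z in 𝓝[>] t, slope (fun s => ‖T (x s) - x s‖) t z < r := by
  have hremainder : ∀ᶠ z in 𝓝[>] t,
      ‖x z - x t - (z - t) • lam t • (T (x t) - x t)‖ ≤ r / 3 * ‖z - t‖ :=
    (hasDerivWithinAt_iff_isLittleO.1 ((hx t ht).mono (Ioi_subset_Ici ht))).def (by positivity)
  have hstep : ∀ᶠ z in 𝓝[>] t, (z - t) * lam t ≤ 1 := by
    have : Tendsto (fun z => (z - t) * lam t) (𝓝[>] t) (𝓝 ((t - t) * lam t)) :=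
      Continuous.continuousWithinAt (by fun_prop)
    exact this.eventually_le_const (by simp)
  filter_upwards [self_mem_nhdsWithin, hremainder, hstep] with z hz hrem hstep
  have hzt : 0 < z - t := sub_pos.2 hz
  have hres := norm_map_sub_self_le_add_two_mul_norm hT (x t) (x z)
    ⟨mul_nonneg hzt.le hlam, hstep⟩
  rw [smul_smul, Real.norm_of_nonneg hzt.le] at hrem
  rw [slope_def_field, div_lt_iff₀ hzt]
  have hrz : 0 < r * (z - t) := mul_pos hr hzt
  linarith

theorem antitoneOn_norm_residual (hT : LipschitzWith 1 T) (hx : IsKrasnoselskiiMannCurve T lam a x)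
    (hlam : ∀ t ∈ Ici a, 0 ≤ lam t) : AntitoneOn (fun t => ‖T (x t) - x t‖) (Ici a) :=
  antitoneOn_Ici_of_eventually_slope_lt
    ((hT.continuous.comp_continuousOn hx.continuousOn).sub hx.continuousOn).norm
    fun t ht _ hr => hx.eventually_slope_norm_residual_lt hT ht (hlam t ht) hr

end NormedSpace

section InnerProductSpace

variable {H : Type*} [NormedAddCommGroup H] [InnerProductSpace ℝ H] {T : H → H} {lam : ℝ → ℝ}
  {a : ℝ} {x : ℝ → H} {y : H}

theorem antitoneOn_norm_sub_sq (hx : IsKrasnoselskiiMannCurve T lam a x)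
    (hy : ∀ z, ‖T z - y‖ ≤ ‖z - y‖) (hlam : ∀ t ∈ Ici a, 0 ≤ lam t) :
    AntitoneOn (fun t => ‖x t - y‖ ^ 2) (Ici a) :=
  antitoneOn_of_hasDerivWithinAt_nonpos (convex_Ici a)
    (f' := fun t => 2 * ⟪x t - y, lam t • (T (x t) - x t)⟫)
    ((hx.continuousOn.sub continuousOn_const).norm.pow 2)
    (fun t ht => ((hx t (interior_subset ht)).mono interior_subset).sub_const y |>.norm_sq)
    fun t ht => two_mul_inner_smul_map_sub_self_nonpos (hy (x t)) (hlam t (interior_subset ht))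

theorem antitoneOn_norm_sub (hx : IsKrasnoselskiiMannCurve T lam a x)
    (hy : ∀ z, ‖T z - y‖ ≤ ‖z - y‖) (hlam : ∀ t ∈ Ici a, 0 ≤ lam t) :
    AntitoneOn (fun t => ‖x t - y‖) (Ici a) := fun _ hs _ ht hst =>
  le_of_sq_le_sq (hx.antitoneOn_norm_sub_sq hy hlam hs ht hst) (norm_nonneg _)

theorem exists_tendsto_norm_sub (hx : IsKrasnoselskiiMannCurve T lam a x)
    (hy : ∀ z, ‖T z - y‖ ≤ ‖z - y‖) (hlam : ∀ t ∈ Ici a, 0 ≤ lam t) :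
    ∃ l, Tendsto (fun t => ‖x t - y‖) atTop (𝓝 l) :=
  exists_tendsto_atTop_of_antitoneOn_Ici (hx.antitoneOn_norm_sub hy hlam)
    ⟨0, forall_mem_image.2 fun _ _ => norm_nonneg _⟩

theorem norm_le (hx : IsKrasnoselskiiMannCurve T lam a x) (hy : ∀ z, ‖T z - y‖ ≤ ‖z - y‖)
    (hlam : ∀ t ∈ Ici a, 0 ≤ lam t) {t : ℝ} (ht : t ∈ Ici a) : ‖x t‖ ≤ ‖x a - y‖ + ‖y‖ := by
  calc ‖x t‖ ≤ ‖x t - y‖ + ‖y‖ := by simpa only [sub_add_cancel] using norm_add_le (x t - y) y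
    _ ≤ ‖x a - y‖ + ‖y‖ := by
        gcongr
        exact hx.antitoneOn_norm_sub hy hlam self_mem_Ici ht ht

theorem integrableOn_neg_two_mul_inner (hx : IsKrasnoselskiiMannCurve T lam a x)
    (hy : ∀ z, ‖T z - y‖ ≤ ‖z - y‖) (hlam : ∀ t ∈ Ici a, 0 ≤ lam t) :
    IntegrableOn (fun t => -(2 * ⟪x t - y, lam t • (T (x t) - x t)⟫)) (Ici a) := by
  obtain ⟨l, hl⟩ := hx.exists_tendsto_norm_sub hy hlam
  rw [integrableOn_Ici_iff_integrableOn_Ioi]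
  exact (integrableOn_Ioi_deriv_of_nonpos
    (((hx.continuousOn.sub continuousOn_const).norm.pow 2) a self_mem_Ici)
    (fun t ht => ((hx.hasDerivAt ht).sub_const y).norm_sq)
    (fun t ht => two_mul_inner_smul_map_sub_self_nonpos (hy (x t)) (hlam t (mem_Ici_of_Ioi ht)))
    (hl.pow 2)).neg

theorem integrableOn_norm_velocity_sq [CompleteSpace H] {M : ℝ}
    (hx : IsKrasnoselskiiMannCurve T lam a x) (hy : ∀ z, ‖T z - y‖ ≤ ‖z - y‖)
    (hlam : ∀ t ∈ Ici a, lam t ∈ Icc 0 M) :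
    IntegrableOn (fun t => ‖lam t • (T (x t) - x t)‖ ^ 2) (Ici a) := by
  have hmeas : AEStronglyMeasurable (fun t => lam t • (T (x t) - x t))
      (volume.restrict (Ici a)) := by
    rw [← restrict_Ioi_eq_restrict_Ici]
    refine (stronglyMeasurable_deriv x).aestronglyMeasurable.congr ?_
    filter_upwards [ae_restrict_mem measurableSet_Ioi] with t ht
    exact (hx.hasDerivAt ht).deriv
  refine ((hx.integrableOn_neg_two_mul_inner hy fun t ht => (hlam t ht).1).const_mul M).mono'
    (hmeas.norm.pow 2) ?_
  filter_upwards [ae_restrict_mem measurableSet_Ici] with t ht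
  obtain ⟨hlam_nonneg, hlam_le⟩ := hlam t ht
  calc ‖‖lam t • (T (x t) - x t)‖ ^ 2‖ = lam t * (lam t * ‖T (x t) - x t‖ ^ 2) := by
        rw [Real.norm_of_nonneg (by positivity), norm_smul_of_nonneg hlam_nonneg]
        ring
    _ ≤ M * (lam t * ‖T (x t) - x t‖ ^ 2) := by gcongr
    _ ≤ M * -(2 * ⟪x t - y, lam t • (T (x t) - x t)⟫) := by
        gcongr
        · exact hlam_nonneg.trans hlam_le
        · exact mul_norm_map_sub_self_sq_le (hy (x t)) hlam_nonneg

theorem tendsto_residual (hT : LipschitzWith 1 T) (hx : IsKrasnoselskiiMannCurve T lam a x)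
    (hy : Function.IsFixedPt T y) (hlam : ∀ t ∈ Ici a, 0 ≤ lam t)
    (hlam_top : ∫⁻ t in Ici a, ENNReal.ofReal (lam t) = ⊤) :
    Tendsto (fun t => T (x t) - x t) atTop (𝓝 0) := by
  have hanti : AntitoneOn (fun t => ‖T (x t) - x t‖ ^ 2) (Ici a) := fun _ hs _ ht hst =>
    pow_le_pow_left₀ (norm_nonneg _) (hx.antitoneOn_norm_residual hT hlam hs ht hst) 2
  have hdiss := hx.integrableOn_neg_two_mul_inner (norm_map_sub_le_of_isFixedPt hT hy) hlam
  have hfinite :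
      ∫⁻ t in Ici a, ENNReal.ofReal (lam t) * ENNReal.ofReal (‖T (x t) - x t‖ ^ 2) ≠ ⊤ := by
    refine ne_top_of_le_ne_top hdiss.lintegral_lt_top.ne
      (setLIntegral_mono' measurableSet_Ici fun t ht => ?_)
    rw [← ENNReal.ofReal_mul (hlam t ht)]
    exact ENNReal.ofReal_le_ofReal
      (mul_norm_map_sub_self_sq_le (norm_map_sub_le_of_isFixedPt hT hy (x t)) (hlam t ht))
  have hsq := tendsto_zero_of_antitoneOn_of_lintegral_mul_ne_top hanti (fun _ _ => sq_nonneg _)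
    hlam_top hfinite
  rw [tendsto_zero_iff_norm_tendsto_zero]
  simpa using hsq.sqrt

theorem exists_isFixedPt_tendstoWeakly [CompleteSpace H] (hT : LipschitzWith 1 T)
    (hx : IsKrasnoselskiiMannCurve T lam a x) (hy : Function.IsFixedPt T y)
    (hlam : ∀ t ∈ Ici a, 0 ≤ lam t) (hres : Tendsto (fun t => T (x t) - x t) atTop (𝓝 0)) :
    ∃ p, Function.IsFixedPt T p ∧ TendstoWeakly x atTop p := by
  have hnorm (p : H) (hp : Function.IsFixedPt T p) :
      ∃ l, Tendsto (fun t => ‖x t - p‖) atTop (𝓝 l) :=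
    hx.exists_tendsto_norm_sub (norm_map_sub_le_of_isFixedPt hT hp) hlam
  refine exists_mem_tendstoWeakly_of_cluster_mem (S := Function.fixedPoints T) ⟨y, hy⟩ hnorm
    fun U hU p hp => ?_
  have hbdd : IsBoundedUnder (· ≤ ·) U fun t => ‖x t - p‖ := by
    refine isBoundedUnder_of_eventually_le (a := ‖x a - y‖ + ‖y‖ + ‖p‖)
      (hU ((eventually_ge_atTop a).mono fun t ht => ?_))
    exact norm_sub_le_of_le (hx.norm_le (norm_map_sub_le_of_isFixedPt hT hy) hlam ht) le_rfl
  exact hp.isFixedPt hT hbdd (hres.mono_left hU)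

end InnerProductSpace

end IsKrasnoselskiiMannCurve

theorem stmt6_general
    {H : Type*} [NormedAddCommGroup H] [InnerProductSpace ℝ H] [CompleteSpace H]
    {T : H → H} (hT : LipschitzWith 1 T) (hfix : ∃ y : H, T y = y)
    {lam : ℝ → ℝ} {M : ℝ} (hlam : ∀ t ≥ (0 : ℝ), lam t ∈ Icc 0 M)
    (hlam_top : ∫⁻ t in Ici (0 : ℝ), ENNReal.ofReal (lam t) = ⊤)
    {x xd : ℝ → H} (hx : ∀ t ≥ (0 : ℝ), HasDerivWithinAt x (xd t) (Ici 0) t)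
    (hode : ∀ t ≥ (0 : ℝ), xd t = lam t • (T (x t) - x t)) :
    (∃ C : ℝ, ∀ t ≥ (0 : ℝ), ‖x t‖ ≤ C) ∧
    IntegrableOn (fun t => ‖xd t‖ ^ 2) (Ici 0) ∧
    Tendsto (fun t => T (x t) - x t) atTop (𝓝 0) ∧
    Tendsto xd atTop (𝓝 0) ∧
    ∃ p : H, T p = p ∧ ∀ z : H, Tendsto (fun t => ⟪x t - p, z⟫) atTop (𝓝 0) := by
  have hcurve : IsKrasnoselskiiMannCurve T lam 0 x := fun t ht =>
    (hx t ht).congr_deriv (hode t ht)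
  have hnonneg : ∀ t ∈ Ici (0 : ℝ), 0 ≤ lam t := fun t ht => (hlam t ht).1
  obtain ⟨y, hy⟩ := hfix
  have hquasi := norm_map_sub_le_of_isFixedPt hT hy
  have hres := hcurve.tendsto_residual hT hy hnonneg hlam_top
  refine ⟨⟨_, fun t ht => hcurve.norm_le hquasi hnonneg ht⟩, ?_, hres, ?_,
    hcurve.exists_isFixedPt_tendstoWeakly hT hy hnonneg hres⟩
  · exact (hcurve.integrableOn_norm_velocity_sq hquasi hlam).congr_fun
      (fun t ht => by rw [hode t ht]) measurableSet_Ici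
  · have hbdd : IsBoundedUnder (· ≤ ·) atTop fun t => ‖lam t‖ :=
      isBoundedUnder_of_eventually_le (a := M) <| (eventually_ge_atTop 0).mono fun t ht =>
        (Real.norm_of_nonneg (hnonneg t ht)).trans_le (hlam t ht).2
    exact (hbdd.smul_tendsto_zero hres).congr' <|
      (eventually_ge_atTop 0).mono fun t ht => (hode t ht).symm

/-- Asymptotic behaviour of the continuous Krasnosel'skiĭ–Mann dynamics
`ẋ(t) = λ(t)(T(x(t)) − x(t))`: the trajectory is bounded, `ẋ ∈ L²`,
`T(x(t)) − x(t) → 0`, `ẋ(t) → 0`, and `x(t)` converges weakly to a fixed point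
of `T`, provided `∫₀^∞ λ(t)(1−λ(t)) dt = +∞` or `inf λ > 0`. -/
theorem stmt6
    {H : Type*} [NormedAddCommGroup H] [InnerProductSpace ℝ H] [CompleteSpace H]
    (T : H → H) (hT : ∀ a b : H, ‖T a - T b‖ ≤ ‖a - b‖)
    (hfix : ∃ y : H, T y = y)
    (lam : ℝ → ℝ) (hlam_meas : Measurable lam)
    (hlam : ∀ t ≥ (0:ℝ), lam t ∈ Icc (0:ℝ) 1)
    (hcond : (∫⁻ t in Ici (0:ℝ), ENNReal.ofReal (lam t * (1 - lam t))) = ⊤ ∨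
      ∃ ε > (0:ℝ), ∀ t ≥ (0:ℝ), ε ≤ lam t)
    (x xd : ℝ → H) (x₀ : H) (hx0 : x 0 = x₀)
    (hx : ∀ t ≥ (0:ℝ), HasDerivAt x (xd t) t)
    (hode : ∀ t ≥ (0:ℝ), xd t = lam t • (T (x t) - x t)) :
    (∃ C : ℝ, ∀ t ≥ (0:ℝ), ‖x t‖ ≤ C) ∧
    IntegrableOn (fun t => ‖xd t‖ ^ 2) (Ici 0) ∧
    Tendsto (fun t => T (x t) - x t) atTop (𝓝 0) ∧
    Tendsto xd atTop (𝓝 0) ∧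
    ∃ p : H, T p = p ∧ ∀ z : H, Tendsto (fun t => ⟪x t - p, z⟫) atTop (𝓝 0) :=
  stmt6_general (LipschitzWith.mk_one fun a b => by simpa only [dist_eq_norm] using hT a b) hfix
    hlam (lintegral_ofReal_eq_top_of_mul_one_sub_or_le hcond)
    (fun t ht => (hx t ht).hasDerivWithinAt) hode
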